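/- arXiv:1303.3545 — 2 statements merged into one kernel-verified Lean document; each statement's English description precedes it below -/
import Mathlib

section
/- Let T be a smooth symmetric 2-tensor field on ℝ^3 \ {0} whose components are homogeneous functions of degree -2, and suppose ∑_{i,j} (D_i D_j T_{ij} - D_i D_i T_{jj}) ≥ 0 on ℝ^3 \ {0}. Fix ξ ∈ ℝ^3 with |ξ| > 1, and define G(s) = ∫_{∂B_1(sξ)} tr_S(T) dA - 2 ∫_{B_1(sξ)} tr_{ℝ^3}(T) dV for s ≥ 1, where tr_S(T) is the trace of T restricted to the tangent space of the sphere and tr_{ℝ^3}(T) = ∑_j T_{jj}. Then G'(1) ≥ 0. -/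
open MeasureTheory Real

noncomputable abbrev E3 : Type := EuclideanSpace ℝ (Fin 3)

/-- The standard surface measure on the unit sphere in `ℝ³`. -/
noncomputable def sphereMeasure : Measure (Metric.sphere (0 : E3) 1) :=
  (volume : Measure E3).toSphere

/-- The `i`-th standard basis vector of `ℝ³`. -/
noncomputable def e3 (i : Fin 3) : E3 := EuclideanSpace.single i 1

/-- Partial derivative `D_i f`. -/
noncomputable def pd (f : E3 → ℝ) (i : Fin 3) (x : E3) : ℝ := fderiv ℝ f x (e3 i)

/-- The trace `tr_{ℝ³}(T) = ∑_j T_jj`. -/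
def trT (T : E3 → Fin 3 → Fin 3 → ℝ) (x : E3) : ℝ := ∑ j, T x j j

/-- The quadratic form `T(v, v) = ∑_{i,j} T_ij v_i v_j`. -/
def quadT (T : E3 → Fin 3 → Fin 3 → ℝ) (x : E3) (v : E3) : ℝ :=
  ∑ i, ∑ j, T x i j * v i * v j

/-- `∑_{i,j} (D_i D_j T_ij - D_i D_i T_jj)`, the leading term of the scalar curvature. -/
noncomputable def scalDiv (T : E3 → Fin 3 → Fin 3 → ℝ) (x : E3) : ℝ :=
  ∑ i, ∑ j, (pd (pd (fun z => T z i j) j) i x - pd (pd (fun z => T z j j) i) i x)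

open Set Metric Filter Topology in
lemma hasDerivAt_integral_compact {X : Type*} [TopologicalSpace X] [CompactSpace X]
    [MeasurableSpace X] [BorelSpace X] (μ : Measure X) [IsFiniteMeasure μ] (H H' : ℝ → X → ℝ)
    (hH : Continuous (Function.uncurry H)) (hH' : Continuous (Function.uncurry H'))
    (hd : ∀ t x, HasDerivAt (fun u => H u x) (H' t x) t) (t : ℝ) :
    HasDerivAt (fun u => ∫ x, H u x ∂μ) (∫ x, H' t x ∂μ) t := by
  have hc : ∀ u, Continuous (H u) := fun u => hH.comp (by fun_prop : Continuous fun x => (u, x))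
  have hc' : ∀ u, Continuous (H' u) := fun u => hH'.comp (by fun_prop : Continuous fun x => (u, x))
  obtain ⟨C, hC⟩ := ((isCompact_closedBall t 1).prod (isCompact_univ (X := X))).exists_bound_of_continuousOn
    hH'.continuousOn
  refine (hasDerivAt_integral_of_dominated_loc_of_deriv_le (bound := fun _ => C)
    (closedBall_mem_nhds t one_pos) ?_ ?_ ?_ ?_ ?_ ?_).2
  · exact .of_forall fun u => (hc u).aestronglyMeasurable_of_compactSpace
  · exact (hc t).integrable_of_hasCompactSupport (HasCompactSupport.of_compactSpace _)
  · exact (hc' t).aestronglyMeasurable_of_compactSpace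
  · exact .of_forall fun x u hu => hC (u, x) ⟨hu, mem_univ _⟩
  · exact integrable_const _
  · exact .of_forall fun x u _ => hd u x

/-- Integral over the unit sphere of a function on the ambient space. -/
noncomputable def sI (f : E3 → ℝ) : ℝ := ∫ y : Metric.sphere (0 : E3) 1, f y ∂sphereMeasure

instance : IsFiniteMeasure sphereMeasure := by unfold sphereMeasure; infer_instance

lemma sI_integrable {f : E3 → ℝ} (hf : Continuous f) :
    Integrable (fun y : Metric.sphere (0 : E3) 1 => f y) sphereMeasure :=
  (hf.comp continuous_subtype_val).integrable_of_hasCompactSupport (HasCompactSupport.of_compactSpace _)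

lemma sI_add {f g : E3 → ℝ} (hf : Continuous f) (hg : Continuous g) :
    sI (fun x => f x + g x) = sI f + sI g := integral_add (sI_integrable hf) (sI_integrable hg)

lemma sI_sub {f g : E3 → ℝ} (hf : Continuous f) (hg : Continuous g) :
    sI (fun x => f x - g x) = sI f - sI g := integral_sub (sI_integrable hf) (sI_integrable hg)

lemma sI_mul (c : ℝ) (f : E3 → ℝ) : sI (fun x => c * f x) = c * sI f := integral_const_mul _ _

lemma sI_sum {ι : Type*} (s : Finset ι) {f : ι → E3 → ℝ} (hf : ∀ i, Continuous (f i)) :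
    sI (fun x => ∑ i ∈ s, f i x) = ∑ i ∈ s, sI (f i) :=
  integral_finsetSum _ (fun i _ => sI_integrable (hf i))

lemma sI_congr {f g : E3 → ℝ} (h : ∀ x, ‖x‖ = 1 → f x = g x) : sI f = sI g :=
  integral_congr_ae (.of_forall fun y => h y (by simp))

lemma sI_nonneg {f : E3 → ℝ} (h : ∀ x, ‖x‖ = 1 → 0 ≤ f x) : 0 ≤ sI f :=
  integral_nonneg (fun y => h y (by simp))

open Set Metric Pointwise in
lemma sI_rot (R : E3 ≃ₗᵢ[ℝ] E3) (f : E3 → ℝ) : sI (fun x => f (R x)) = sI f := by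
  let φ : sphere (0 : E3) 1 ≃ₜ sphere (0 : E3) 1 :=
    R.toHomeomorph.subtype (fun x => by simp)
  have hφ : ∀ y, ((φ y : sphere (0 : E3) 1) : E3) = R y := fun y => rfl
  have mp : MeasurePreserving φ sphereMeasure sphereMeasure := by
    refine ⟨φ.measurable, ?_⟩
    ext s hs
    rw [φ.measurableEmbedding.map_apply]
    unfold sphereMeasure
    rw [Measure.toSphere_apply' _ hs, Measure.toSphere_apply' _ (φ.measurable hs)]
    congr 1
    have : (Ioo (0:ℝ) 1 • (Subtype.val '' (φ ⁻¹' s)) : Set E3) = R ⁻¹' (Ioo (0:ℝ) 1 • (Subtype.val '' s) : Set E3) := by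
      ext x
      simp only [mem_smul, mem_preimage, mem_image]
      constructor
      · rintro ⟨a, ha, _, ⟨y, hy, rfl⟩, rfl⟩
        exact ⟨a, ha, _, ⟨_, hy, rfl⟩, by simp [hφ]⟩
      · rintro ⟨a, ha, _, ⟨y, hy, rfl⟩, h⟩
        refine ⟨a, ha, _, ⟨φ.symm y, by simpa using hy, rfl⟩, R.injective ?_⟩
        rw [← h, map_smul, ← hφ]; simp
    rw [this]
    exact R.measurePreserving.measure_preimage_equiv (f := R.toMeasurableEquiv) _
  exact mp.integral_comp φ.measurableEmbedding (fun y => f y)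

open Set Metric in
lemma polar_ball (f : E3 → ℝ) (hf : Continuous f) :
    ∫ x in closedBall (0 : E3) 1, f x = ∫ ρ in (0:ℝ)..1, ρ ^ 2 * sI (fun y => f (ρ • y)) := by
  set g : E3 → ℝ := (closedBall (0 : E3) 1).indicator f with hg
  have hdim : Module.finrank ℝ E3 = 3 := by simp
  have mp := (volume : Measure E3).measurePreserving_homeomorphUnitSphereProd
  rw [hdim] at mp
  have hgi : Integrable g := (integrable_indicator_iff isClosed_closedBall.measurableSet).2
    (hf.continuousOn.integrableOn_compact (isCompact_closedBall _ _))
  have hgi' : Integrable (fun p : sphere (0 : E3) 1 × Ioi (0 : ℝ) => g (p.2.1 • p.1.1))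
      ((volume : Measure E3).toSphere.prod (Measure.volumeIoiPow (3 - 1))) := by
    rw [← mp.integrable_comp_emb (Homeomorph.measurableEmbedding _)]
    have h0 : Integrable (fun x : ({0}ᶜ : Set E3) => g x) (Measure.comap Subtype.val volume) := by
      exact (integrableOn_iff_comap_subtypeVal (f := g) (s := {0}ᶜ) (by measurability)).1 hgi.integrableOn
    refine h0.congr (.of_forall fun x => ?_)
    have hx : ‖x.1‖ ≠ 0 := norm_ne_zero_iff.2 x.2
    simp [smul_smul, hx]
  calc ∫ x in closedBall (0 : E3) 1, f x = ∫ x, g x := by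
        rw [integral_indicator isClosed_closedBall.measurableSet]
    _ = ∫ x : ({0}ᶜ : Set E3), g x ∂(Measure.comap Subtype.val volume) := by
      rw [integral_subtype_comap (measurableSet_singleton _).compl g, restrict_compl_singleton]
    _ = ∫ p : sphere (0 : E3) 1 × Ioi (0 : ℝ), g (p.2.1 • p.1.1) 
        ∂((volume : Measure E3).toSphere.prod (Measure.volumeIoiPow (3 - 1))) := by
      rw [← mp.integral_comp (Homeomorph.measurableEmbedding _)]
      refine integral_congr_ae (.of_forall fun x => ?_)
      have hx : ‖x.1‖ ≠ 0 := norm_ne_zero_iff.2 x.2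
      simp [smul_smul, hx]
    _ = ∫ ρ : Ioi (0 : ℝ), sI (fun y => g (ρ.1 • y)) ∂(Measure.volumeIoiPow (3 - 1)) := by
      rw [integral_prod_symm _ hgi']; rfl
    _ = ∫ ρ in Ioi (0 : ℝ), ρ ^ 2 * sI (fun y => g (ρ • y)) := by
      simp only [Measure.volumeIoiPow, ENNReal.ofReal]
      rw [integral_withDensity_eq_integral_smul,
        integral_subtype_comap measurableSet_Ioi fun a ↦ Real.toNNReal (a ^ (3 - 1)) • sI (fun y => g (a • y)),
        setIntegral_congr_fun measurableSet_Ioi fun x hx ↦ ?_]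
      · simp only [NNReal.smul_def]; rw [Real.coe_toNNReal _ (pow_nonneg hx.out.le _)]; simp
      · exact (measurable_subtype_coe.pow_const _).real_toNNReal
    _ = ∫ ρ in Ioc (0 : ℝ) 1, ρ ^ 2 * sI (fun y => f (ρ • y)) := by
      rw [← integral_indicator measurableSet_Ioi, ← integral_indicator measurableSet_Ioc]
      congr 1
      ext ρ
      by_cases h0 : 0 < ρ
      · by_cases h1 : ρ ≤ 1
        · rw [indicator_of_mem (by exact h0), indicator_of_mem (by exact ⟨h0, h1⟩)]
          congr 1
          refine sI_congr fun x hx => ?_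
          exact indicator_of_mem (by simp [norm_smul, hx, abs_of_pos h0, h1]) _
        · rw [indicator_of_mem (by exact h0), indicator_of_notMem (by simp [h1])]
          have : sI (fun y => g (ρ • y)) = sI (fun y => 0) := by
            refine sI_congr fun x hx => ?_
            exact indicator_of_notMem (by simpa [norm_smul, hx, abs_of_pos h0] using h1) _
          rw [this]; simp [sI]
      · rw [indicator_of_notMem (by simpa using h0), indicator_of_notMem (by simp [h0])]
    _ = _ := by rw [intervalIntegral.integral_of_le zero_le_one]

/-- Smooth functions. -/
def Sm (f : E3 → ℝ) : Prop := ContDiff ℝ (⊤ : ℕ∞) f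

lemma Sm.cd {f : E3 → ℝ} (hf : Sm f) : ContDiff ℝ (⊤ : ℕ∞) f := hf

lemma Sm.continuous {f : E3 → ℝ} (hf : Sm f) : Continuous f := hf.cd.continuous

lemma Sm.differentiable {f : E3 → ℝ} (hf : Sm f) : Differentiable ℝ f :=
  hf.cd.differentiable (by simp)

lemma Sm.pd {f : E3 → ℝ} (hf : Sm f) (i : Fin 3) : Sm (pd f i) := by
  unfold Sm _root_.pd
  exact (hf.cd.fderiv_right (m := (⊤ : ℕ∞)) (by simp)).clm_apply contDiff_const

lemma Sm.mul {f g : E3 → ℝ} (hf : Sm f) (hg : Sm g) : Sm (fun x => f x * g x) :=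
  ContDiff.mul hf hg

lemma Sm.add {f g : E3 → ℝ} (hf : Sm f) (hg : Sm g) : Sm (fun x => f x + g x) :=
  ContDiff.add hf hg

lemma Sm.sum {ι : Type*} {s : Finset ι} {f : ι → E3 → ℝ} (hf : ∀ i, Sm (f i)) :
    Sm (fun x => ∑ i ∈ s, f i x) := ContDiff.sum (fun i _ => hf i)

lemma Sm.coord (i : Fin 3) : Sm (fun x : E3 => x i) := by
  unfold Sm; fun_prop

lemma Sm.scale {f : E3 → ℝ} (hf : Sm f) (r : ℝ) : Sm (fun x => f (r • x)) :=
  hf.cd.comp (contDiff_const_smul r)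

/-- Euler operator. -/
noncomputable def Eu (f : E3 → ℝ) (x : E3) : ℝ := ∑ k, x k * pd f k x

lemma Sm.Eu {f : E3 → ℝ} (hf : Sm f) : Sm (Eu f) :=
  Sm.sum fun k => (Sm.coord k).mul (hf.pd k)

lemma e3_apply (i j : Fin 3) : e3 i j = if j = i then 1 else 0 := by
  simp [e3]

lemma vec_eq_sum (x : E3) : x = ∑ k, x k • e3 k := by
  ext i
  fin_cases i <;> simp [Fin.sum_univ_three, e3_apply]

lemma fderiv_eq_sum (f : E3 → ℝ) (x v : E3) : fderiv ℝ f x v = ∑ k, v k * pd f k x := by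
  conv_lhs => rw [vec_eq_sum v]
  simp [pd]

lemma pd_mul {f g : E3 → ℝ} (hf : Sm f) (hg : Sm g) (i : Fin 3) (x : E3) :
    pd (fun z => f z * g z) i x = pd f i x * g x + f x * pd g i x := by
  unfold pd
  rw [fderiv_fun_mul (hf.differentiable x) (hg.differentiable x)]
  simp; ring

lemma pd_add {f g : E3 → ℝ} (hf : Sm f) (hg : Sm g) (i : Fin 3) (x : E3) :
    pd (fun z => f z + g z) i x = pd f i x + pd g i x := by
  unfold pd
  rw [fderiv_fun_add (hf.differentiable x) (hg.differentiable x)]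
  simp

lemma pd_sum {f : Fin 3 → E3 → ℝ} (hf : ∀ k, Sm (f k)) (i : Fin 3) (x : E3) :
    pd (fun z => ∑ k, f k z) i x = ∑ k, pd (f k) i x := by
  unfold pd
  rw [fderiv_fun_sum (fun k _ => (hf k).differentiable x)]
  simp

lemma pd_coord (i j : Fin 3) (x : E3) : pd (fun z => z j) i x = if j = i then 1 else 0 := by
  have : fderiv ℝ (fun z : E3 => z j) x = EuclideanSpace.proj j :=
    (EuclideanSpace.proj (𝕜 := ℝ) j : E3 →L[ℝ] ℝ).fderiv
  unfold pd
  rw [this]; simp [e3_apply]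

lemma pd_scale (f : E3 → ℝ) (r : ℝ) (i : Fin 3) (x : E3) :
    pd (fun z => f (r • z)) i x = r * pd f i (r • x) := by
  unfold pd
  rw [fderiv_comp_smul]; simp

lemma pd_comm {f : E3 → ℝ} (hf : Sm f) (i j : Fin 3) (x : E3) :
    pd (pd f j) i x = pd (pd f i) j x := by
  have hd : Differentiable ℝ (fderiv ℝ f) :=
    (hf.cd.fderiv_right (m := 1) (by norm_cast)).differentiable (by simp)
  have key : ∀ a b : Fin 3, pd (pd f b) a x = fderiv ℝ (fderiv ℝ f) x (e3 a) (e3 b) := by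
    intro a b
    unfold pd
    rw [fderiv_clm_apply (hd x) (by fun_prop)]
    simp
  rw [key, key]
  have := (hf.cd.contDiffAt (x := x)).isSymmSndFDerivAt (by simp only [minSmoothness_of_isRCLikeNormedField]; exact WithTop.coe_le_coe.2 (le_top : (2 : ℕ∞) ≤ ⊤))
  exact this _ _

lemma Eu_scale (f : E3 → ℝ) (r : ℝ) (x : E3) :
    Eu (fun z => f (r • z)) x = Eu f (r • x) := by
  simp only [Eu, pd_scale f]
  refine Finset.sum_congr rfl fun k _ => ?_
  simp; ring

lemma Eu_mul {f g : E3 → ℝ} (hf : Sm f) (hg : Sm g) (x : E3) :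
    Eu (fun z => f z * g z) x = Eu f x * g x + f x * Eu g x := by
  simp only [Eu, pd_mul hf hg, Fin.sum_univ_three]; ring

lemma Eu_coord (i : Fin 3) (x : E3) : Eu (fun z => z i) x = x i := by
  simp [Eu, pd_coord]

lemma pd_Eu {f : E3 → ℝ} (hf : Sm f) (j : Fin 3) (x : E3) :
    pd (Eu f) j x = pd f j x + Eu (pd f j) x := by
  have : Eu f = fun z => ∑ k, z k * pd f k z := rfl
  rw [this, pd_sum (fun k => (Sm.coord k).mul (hf.pd k))]
  simp only [pd_mul (Sm.coord _) (hf.pd _), pd_coord, Finset.sum_add_distrib, Eu]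
  congr 1
  · simp
  · exact Finset.sum_congr rfl fun k _ => by rw [pd_comm hf]

/-- rotation in the plane `(i,j)` -/
noncomputable def rotL (i j : Fin 3) (t : ℝ) : E3 →ₗ[ℝ] E3 where
  toFun x := x + (cos t - 1) • (x i • e3 i + x j • e3 j) + sin t • (x i • e3 j - x j • e3 i)
  map_add' x y := by simp; module
  map_smul' c x := by simp; module

noncomputable def rotI (i j : Fin 3) (hij : i ≠ j) (t : ℝ) : E3 ≃ₗᵢ[ℝ] E3 :=
  LinearIsometry.toLinearIsometryEquiv (⟨rotL i j t, by
    intro x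
    have h : ‖rotL i j t x‖ ^ 2 = ‖x‖ ^ 2 := by
      have hcs := sin_sq_add_cos_sq t
      have hs : sin t ^ 2 = 1 - cos t ^ 2 := by linarith
      simp only [EuclideanSpace.norm_sq_eq, Fin.sum_univ_three, rotL, LinearMap.coe_mk, AddHom.coe_mk,
        PiLp.add_apply, PiLp.sub_apply, PiLp.smul_apply, e3_apply, smul_eq_mul, Real.norm_eq_abs, sq_abs]
      fin_cases i <;> fin_cases j <;> first | exact absurd rfl hij | (simp; ring_nf; rw [hs]; ring)
    exact (pow_left_inj₀ (norm_nonneg _) (norm_nonneg _) two_ne_zero).1 h⟩ : E3 →ₗᵢ[ℝ] E3) rfl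

lemma rotI_apply (i j : Fin 3) (hij : i ≠ j) (t : ℝ) (x : E3) : rotI i j hij t x =
  x + (cos t - 1) • (x i • e3 i + x j • e3 j) + sin t • (x i • e3 j - x j • e3 i) := rfl

lemma sI_rot_deriv {h : E3 → ℝ} (hh : Sm h) (i j : Fin 3) :
    sI (fun x => x i * pd h j x - x j * pd h i x) = 0 := by
  by_cases hij : i = j
  · subst hij; simp [sI]
  have hc1 : Continuous fun x : E3 => fderiv ℝ h x := hh.cd.continuous_fderiv (by simp)
  let R : ℝ → E3 → E3 := fun t x =>
    x + (cos t - 1) • (x i • e3 i + x j • e3 j) + sin t • (x i • e3 j - x j • e3 i)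
  let R' : ℝ → E3 → E3 := fun t x =>
    (-sin t) • (x i • e3 i + x j • e3 j) + cos t • (x i • e3 j - x j • e3 i)
  have hR : ∀ t x, HasDerivAt (fun u => R u x) (R' t x) t := by
    intro t x
    have h1 := ((hasDerivAt_cos t).sub_const 1).smul_const (x i • e3 i + x j • e3 j)
    have h2 := (hasDerivAt_sin t).smul_const (x i • e3 j - x j • e3 i)
    exact (h1.const_add x).add h2
  have hRc : Continuous (fun p : ℝ × Metric.sphere (0 : E3) 1 => R p.1 p.2) := by
    simp only [R]; fun_prop
  have hRc' : Continuous (fun p : ℝ × Metric.sphere (0 : E3) 1 => R' p.1 p.2) := by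
    simp only [R']; fun_prop
  have hd := hasDerivAt_integral_compact (X := Metric.sphere (0 : E3) 1) sphereMeasure
    (fun t x => h (R t x)) (fun t x => fderiv ℝ h (R t x) (R' t x))
    (hh.continuous.comp hRc) ((hc1.comp hRc).clm_apply hRc')
    (fun t x => ((hh.differentiable _).hasFDerivAt.comp_hasDerivAt t (hR t x))) 0
  have hconst : (fun t => ∫ x : Metric.sphere (0 : E3) 1, h (R t x) ∂sphereMeasure) = fun _ => sI h := by
    ext t
    exact sI_rot (rotI i j hij t) h
  rw [hconst] at hd
  have := hd.unique (hasDerivAt_const 0 _)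
  rw [← this]
  refine integral_congr_ae (.of_forall fun x => ?_)
  simp [R, R', pd]

lemma star {h : E3 → ℝ} (hh : Sm h) (i : Fin 3) :
    sI (pd h i) = sI (fun x => x i * Eu h x) + 2 * sI (fun x => x i * h x) := by
  have hx : ∀ j, Sm (fun x => x j * h x) := fun j => (Sm.coord j).mul hh
  have h0 : sI (fun x => ∑ j, (x j * pd (fun z => z j * h z) i x - x i * pd (fun z => z j * h z) j x)) = 0 := by
    rw [sI_sum]
    · exact Finset.sum_eq_zero fun j _ => sI_rot_deriv (hx j) j i
    · intro j
      exact ((Sm.coord j).mul ((hx j).pd i)).continuous.sub ((Sm.coord i).mul ((hx j).pd j)).continuous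
  have h1 : sI (fun x => ∑ j, (x j * pd (fun z => z j * h z) i x - x i * pd (fun z => z j * h z) j x))
      = sI (fun x => pd h i x - x i * Eu h x - 2 * (x i * h x)) := by
    refine sI_congr fun x hx1 => ?_
    have hn : x 0 ^ 2 + x 1 ^ 2 + x 2 ^ 2 = 1 := by
      have := EuclideanSpace.norm_sq_eq x
      rw [hx1] at this
      simpa [Fin.sum_univ_three] using this.symm
    simp only [pd_mul (Sm.coord _) hh, pd_coord, Eu]
    have hp : ∀ c d : ℝ, pd h i x - c - d = (x 0 ^ 2 + x 1 ^ 2 + x 2 ^ 2) * pd h i x - c - d := by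
      intro c d; rw [hn, one_mul]
    rw [hp]
    fin_cases i <;> simp [Fin.sum_univ_three] <;> ring
  rw [h1, sI_sub, sI_sub, sI_mul] at h0
  · linarith
  · exact (hh.pd i).continuous
  · exact ((Sm.coord i).mul hh.Eu).continuous
  · exact (hh.pd i).continuous.sub ((Sm.coord i).mul hh.Eu).continuous
  · exact (((Sm.coord i).mul hh).continuous.const_smul (2:ℝ))

/-- Sphere integral of the trace. -/
noncomputable def sP (F : Fin 3 → Fin 3 → E3 → ℝ) : ℝ := ∑ j, sI (F j j)

/-- Sphere integral of the normal component. -/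
noncomputable def sQ (F : Fin 3 → Fin 3 → E3 → ℝ) : ℝ := ∑ i, ∑ j, sI (fun x => x i * x j * F i j x)

/-- Sphere integral of the normal part of the divergence. -/
noncomputable def sV (F : Fin 3 → Fin 3 → E3 → ℝ) : ℝ := ∑ i, ∑ j, sI (fun x => x i * pd (F i j) j x)

/-- Componentwise Euler operator. -/
noncomputable def EE (F : Fin 3 → Fin 3 → E3 → ℝ) : Fin 3 → Fin 3 → E3 → ℝ := fun i j => Eu (F i j)

lemma sV_eq {F : Fin 3 → Fin 3 → E3 → ℝ} (hF : ∀ i j, Sm (F i j)) :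
    sV F = 3 * sQ F + sQ (EE F) - sP F := by
  have key : ∀ i j, (if i = j then sI (F i j) else 0) + sI (fun x => x i * pd (F i j) j x)
      = 3 * sI (fun x => x i * x j * F i j x) + sI (fun x => x i * x j * EE F i j x) := by
    intro i j
    have hxF := (Sm.coord i).mul (hF i j)
    have h := star hxF j
    have h1 : sI (pd (fun x => x i * F i j x) j)
        = (if i = j then sI (F i j) else 0) + sI (fun x => x i * pd (F i j) j x) := by
      have : pd (fun x => x i * F i j x) j
          = fun x => (if i = j then 1 else 0) * F i j x + x i * pd (F i j) j x := by
        ext x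
        rw [pd_mul (Sm.coord i) (hF i j), pd_coord]
      rw [this, sI_add, sI_mul]
      · simp
      · exact (hF i j).continuous.const_smul (if i = j then (1:ℝ) else 0)
      · exact ((Sm.coord i).mul ((hF i j).pd j)).continuous
    have h2 : sI (fun x => x j * Eu (fun x => x i * F i j x) x)
        = sI (fun x => x i * x j * F i j x) + sI (fun x => x i * x j * EE F i j x) := by
      rw [← sI_add]
      · refine sI_congr fun x _ => ?_
        rw [Eu_mul (Sm.coord i) (hF i j), Eu_coord, EE]; ring
      · exact (((Sm.coord i).mul (Sm.coord j)).mul (hF i j)).continuous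
      · exact (((Sm.coord i).mul (Sm.coord j)).mul (hF i j).Eu).continuous
    have h3 : sI (fun x => x j * (x i * F i j x)) = sI (fun x => x i * x j * F i j x) :=
      sI_congr fun x _ => by ring
    rw [h1, h2, h3] at h
    linarith
  have hs : ∑ i, ∑ j, ((if i = j then sI (F i j) else 0) + sI (fun x => x i * pd (F i j) j x))
      = ∑ i, ∑ j, (3 * sI (fun x => x i * x j * F i j x) + sI (fun x => x i * x j * EE F i j x)) :=
    Finset.sum_congr rfl fun i _ => Finset.sum_congr rfl fun j _ => key i j
  simp only [Finset.sum_add_distrib, ← Finset.mul_sum, Finset.sum_ite_eq, Finset.mem_univ, if_true] at hs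
  unfold sV sQ sP
  linarith

lemma sI_pd_pd {f : E3 → ℝ} (hf : Sm f) (i j : Fin 3) :
    sI (pd (pd f j) i) = sI (fun x => x i * pd (Eu f) j x) + sI (fun x => x i * pd f j x) := by
  rw [star (hf.pd j) i]
  have : sI (fun x => x i * pd (Eu f) j x)
      = sI (fun x => x i * Eu (pd f j) x) + sI (fun x => x i * pd f j x) := by
    rw [← sI_add]
    · refine sI_congr fun x _ => ?_
      rw [pd_Eu hf]; ring
    · exact ((Sm.coord i).mul (hf.pd j).Eu).continuous
    · exact ((Sm.coord i).mul (hf.pd j)).continuous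
  rw [this]; ring

/-- The scalar curvature expression for a matrix of functions. -/
noncomputable def scF (F : Fin 3 → Fin 3 → E3 → ℝ) (x : E3) : ℝ :=
  ∑ i, ∑ j, (pd (pd (F i j) j) i x - pd (pd (F j j) i) i x)

lemma sI_Eu {f : E3 → ℝ} (hf : Sm f) : sI (Eu f) = ∑ i, sI (fun x => x i * pd f i x) := by
  rw [← sI_sum]
  · rfl
  · exact fun i => ((Sm.coord i).mul (hf.pd i)).continuous

lemma sI_scF {F : Fin 3 → Fin 3 → E3 → ℝ} (hF : ∀ i j, Sm (F i j)) :
    sI (scF F) = - (sP F - 3 * sQ F + 2 * sP (EE F) - 4 * sQ (EE F) + sP (EE (EE F)) - sQ (EE (EE F))) := by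
  have hEF : ∀ i j, Sm (EE F i j) := fun i j => (hF i j).Eu
  have h1 : sI (scF F) = ∑ i, ∑ j, (sI (pd (pd (F i j) j) i) - sI (pd (pd (F j j) i) i)) := by
    unfold scF
    rw [sI_sum]
    · refine Finset.sum_congr rfl fun i _ => ?_
      rw [sI_sum]
      · refine Finset.sum_congr rfl fun j _ => ?_
        rw [sI_sub (((hF i j).pd j).pd i).continuous (((hF j j).pd i).pd i).continuous]
      · exact fun j => (((hF i j).pd j).pd i).continuous.sub (((hF j j).pd i).pd i).continuous
    · exact fun i => continuous_finsetSum _ fun j _ =>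
        (((hF i j).pd j).pd i).continuous.sub (((hF j j).pd i).pd i).continuous
  have h2 : ∑ i, ∑ j, sI (pd (pd (F i j) j) i) = sV (EE F) + sV F := by
    simp only [sV, ← Finset.sum_add_distrib]
    exact Finset.sum_congr rfl fun i _ => Finset.sum_congr rfl fun j _ => sI_pd_pd (hF i j) i j
  have h3 : ∑ i, ∑ j, sI (pd (pd (F j j) i) i) = sP (EE (EE F)) + sP (EE F) := by
    rw [Finset.sum_comm]
    simp only [sP, ← Finset.sum_add_distrib]
    refine Finset.sum_congr rfl fun j _ => ?_
    have a1 : sI (EE (EE F) j j) = _ := sI_Eu (hEF j j)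
    have a2 : sI (EE F j j) = _ := sI_Eu (hF j j)
    rw [a1, a2, ← Finset.sum_add_distrib]
    exact Finset.sum_congr rfl fun i _ => sI_pd_pd (hF j j) i i
  rw [h1]
  simp only [Finset.sum_sub_distrib]
  rw [h2, h3, sV_eq hF, sV_eq hEF]
  ring

/-- Rescaling. -/
noncomputable def Fr (F : Fin 3 → Fin 3 → E3 → ℝ) (r : ℝ) : Fin 3 → Fin 3 → E3 → ℝ :=
  fun i j x => F i j (r • x)

lemma EE_Fr (F : Fin 3 → Fin 3 → E3 → ℝ) (r : ℝ) : EE (Fr F r) = Fr (EE F) r := by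
  ext i j x
  exact Eu_scale (F i j) r x

lemma scF_Fr (F : Fin 3 → Fin 3 → E3 → ℝ) (hF : ∀ i j, Sm (F i j)) (r : ℝ) (x : E3) :
    scF (Fr F r) x = r ^ 2 * scF F (r • x) := by
  have h : ∀ (f : E3 → ℝ) (_ : Sm f) (i j : Fin 3), pd (pd (fun z => f (r • z)) j) i x
      = r ^ 2 * pd (pd f j) i (r • x) := by
    intro f hf i j
    have : pd (fun z => f (r • z)) j = fun z => (fun w => r * pd f j w) (r • z) := by
      ext z; exact pd_scale f r j z
    rw [this, pd_scale (fun w => r * pd f j w)]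
    have : pd (fun w => r * pd f j w) i (r • x) = r * pd (pd f j) i (r • x) := by
      have h5 := fderiv_const_mul ((hf.pd j).differentiable (r • x)) r
      exact congrArg (fun L : E3 →L[ℝ] ℝ => L (e3 i)) h5
    rw [this]; ring
  simp only [scF, Finset.mul_sum, mul_sub]
  exact Finset.sum_congr rfl fun i _ => Finset.sum_congr rfl fun j _ => by
    rw [← h (F i j) (hF i j) i j, ← h (F j j) (hF j j) i i]; rfl

lemma sI_scale_deriv {w f : E3 → ℝ} (hw : Continuous w) (hf : Sm f) (r : ℝ) :
    HasDerivAt (fun r => sI (fun x => w x * f (r • x))) (sI (fun x => w x * fderiv ℝ f (r • x) x)) r := by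
  have hc1 : Continuous fun x : E3 => fderiv ℝ f x := hf.cd.continuous_fderiv (by simp)
  have hfc := hf.continuous
  refine hasDerivAt_integral_compact (X := Metric.sphere (0 : E3) 1) sphereMeasure
    (fun t x => w x * f (t • x)) (fun t x => w x * fderiv ℝ f (t • (x : E3)) x) ?_ ?_ ?_ r
  · simp only [Function.uncurry_def]; fun_prop
  · simp only [Function.uncurry_def]
    refine Continuous.mul (by fun_prop) (Continuous.clm_apply ?_ (by fun_prop))
    exact hc1.comp (by fun_prop)
  · intro t x
    have h1 : HasDerivAt (fun u : ℝ => u • (x : E3)) (x : E3) t := by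
      simpa using (hasDerivAt_id t).smul_const (x : E3)
    exact ((hf.differentiable _).hasFDerivAt.comp_hasDerivAt t h1).const_mul _

lemma sI_scale_deriv' {w f : E3 → ℝ} (hw : Continuous w) (hf : Sm f) (r : ℝ) (hr : r ≠ 0) :
    HasDerivAt (fun r => sI (fun x => w x * f (r • x))) (r⁻¹ * sI (fun x => w x * Eu f (r • x))) r := by
  convert sI_scale_deriv hw hf r using 1
  rw [← sI_mul]
  refine sI_congr fun x _ => ?_
  simp only [fderiv_eq_sum, Eu]
  simp only [PiLp.smul_apply, smul_eq_mul, mul_assoc, ← Finset.mul_sum]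
  field_simp

lemma sP_deriv {F : Fin 3 → Fin 3 → E3 → ℝ} (hF : ∀ i j, Sm (F i j)) (r : ℝ) (hr : r ≠ 0) :
    HasDerivAt (fun r => sP (Fr F r)) (r⁻¹ * sP (Fr (EE F) r)) r := by
  unfold sP
  rw [Finset.mul_sum]
  refine HasDerivAt.fun_sum fun j _ => ?_
  have h := sI_scale_deriv' (w := fun _ => 1) continuous_const (hF j j) r hr
  simp only [one_mul] at h
  exact h

lemma sQ_deriv {F : Fin 3 → Fin 3 → E3 → ℝ} (hF : ∀ i j, Sm (F i j)) (r : ℝ) (hr : r ≠ 0) :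
    HasDerivAt (fun r => sQ (Fr F r)) (r⁻¹ * sQ (Fr (EE F) r)) r := by
  unfold sQ
  simp only [Finset.mul_sum]
  refine HasDerivAt.fun_sum fun i _ => HasDerivAt.fun_sum fun j _ => ?_
  exact sI_scale_deriv' (w := fun x => x i * x j) (by fun_prop) (hF i j) r hr

lemma sP_cont {F : Fin 3 → Fin 3 → E3 → ℝ} (hF : ∀ i j, Sm (F i j)) : Continuous (fun r => sP (Fr F r)) := by
  unfold sP
  refine continuous_finsetSum _ fun j _ => ?_
  have := fun r => (sI_scale_deriv (w := fun _ => 1) continuous_const (hF j j) r).continuousAt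
  simp only [one_mul] at this
  exact continuous_iff_continuousAt.2 this

lemma sQ_cont {F : Fin 3 → Fin 3 → E3 → ℝ} (hF : ∀ i j, Sm (F i j)) : Continuous (fun r => sQ (Fr F r)) := by
  unfold sQ
  refine continuous_finsetSum _ fun i _ => continuous_finsetSum _ fun j _ => ?_
  exact continuous_iff_continuousAt.2 fun r =>
    (sI_scale_deriv (w := fun x => x i * x j) (by fun_prop) (hF i j) r).continuousAt

/-- The rescaled functional. -/
noncomputable def uF (F : Fin 3 → Fin 3 → E3 → ℝ) (r : ℝ) : ℝ :=
  r ^ 3 * (sP (Fr F r) - sQ (Fr F r)) - 2 * ∫ ρ in (0:ℝ)..r, ρ ^ 2 * sP (Fr F ρ)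

/-- `K`, with `uF' = r * K`. -/
noncomputable def kF (F : Fin 3 → Fin 3 → E3 → ℝ) (r : ℝ) : ℝ :=
  r * (sP (Fr F r) - 3 * sQ (Fr F r) + sP (Fr (EE F) r) - sQ (Fr (EE F) r))

lemma kF_deriv {F : Fin 3 → Fin 3 → E3 → ℝ} (hF : ∀ i j, Sm (F i j)) (r : ℝ) (hr : r ≠ 0) :
    HasDerivAt (kF F) (- (r ^ 2 * sI (fun x => scF F (r • x)))) r := by
  have hEF : ∀ i j, Sm (EE F i j) := fun i j => (hF i j).Eu
  have h := (hasDerivAt_id r).mul ((((sP_deriv hF r hr).sub ((sQ_deriv hF r hr).const_mul 3)).add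
    (sP_deriv hEF r hr)).sub (sQ_deriv hEF r hr))
  refine h.congr_deriv ?_
  have hs := sI_scF (F := Fr F r) (fun i j => (hF i j).scale r)
  have : sI (scF (Fr F r)) = r ^ 2 * sI (fun x => scF F (r • x)) := by
    rw [← sI_mul]; exact sI_congr fun x _ => scF_Fr F hF r x
  rw [← this, hs]
  simp only [EE_Fr]
  simp only [id]
  simp
  field_simp
  ring

lemma uF_deriv {F : Fin 3 → Fin 3 → E3 → ℝ} (hF : ∀ i j, Sm (F i j)) (r : ℝ) (hr : r ≠ 0) :
    HasDerivAt (uF F) (r * kF F r) r := by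
  have hc : Continuous fun ρ : ℝ => ρ ^ 2 * sP (Fr F ρ) := (continuous_pow 2).mul (sP_cont hF)
  have hi : HasDerivAt (fun r => ∫ ρ in (0:ℝ)..r, ρ ^ 2 * sP (Fr F ρ)) (r ^ 2 * sP (Fr F r)) r :=
    intervalIntegral.integral_hasDerivAt_right (hc.intervalIntegrable _ _)
      hc.aestronglyMeasurable.stronglyMeasurableAtFilter hc.continuousAt
  have h := ((hasDerivAt_pow 3 r).mul ((sP_deriv hF r hr).sub (sQ_deriv hF r hr))).sub (hi.const_mul 2)
  refine h.congr_deriv ?_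
  simp [kF]
  field_simp
  ring

lemma uF_cont {F : Fin 3 → Fin 3 → E3 → ℝ} (hF : ∀ i j, Sm (F i j)) : Continuous (uF F) := by
  have hc : Continuous fun ρ : ℝ => ρ ^ 2 * sP (Fr F ρ) := (continuous_pow 2).mul (sP_cont hF)
  unfold uF
  exact ((continuous_pow 3).mul ((sP_cont hF).sub (sQ_cont hF))).sub
    (continuous_const.mul (intervalIntegral.continuous_primitive (fun a b => hc.intervalIntegrable a b) 0))

lemma kF_cont {F : Fin 3 → Fin 3 → E3 → ℝ} (hF : ∀ i j, Sm (F i j)) : Continuous (kF F) := by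
  have hEF : ∀ i j, Sm (EE F i j) := fun i j => (hF i j).Eu
  unfold kF
  exact continuous_id.mul ((((sP_cont hF).sub (continuous_const.mul (sQ_cont hF))).add (sP_cont hEF)).sub (sQ_cont hEF))

lemma main_1d {F : Fin 3 → Fin 3 → E3 → ℝ} (hF : ∀ i j, Sm (F i j))
    (hs : ∀ x, ‖x‖ ≤ 1 → 0 ≤ scF F x) : 0 ≤ uF F 1 - kF F 1 := by
  have hk : AntitoneOn (kF F) (Set.Icc 0 1) := by
    refine antitoneOn_of_hasDerivWithinAt_nonpos (convex_Icc 0 1) (kF_cont hF).continuousOn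
      (f' := fun r => - (r ^ 2 * sI (fun x => scF F (r • x)))) ?_ ?_
    · intro r hr
      rw [interior_Icc] at hr
      exact (kF_deriv hF r hr.1.ne').hasDerivWithinAt
    · intro r hr
      rw [interior_Icc] at hr
      have : 0 ≤ sI (fun x => scF F (r • x)) := sI_nonneg fun x hx => hs _ (by
        rw [norm_smul, hx, mul_one, Real.norm_eq_abs, abs_of_pos hr.1]; exact hr.2.le)
      have := mul_nonneg (sq_nonneg r) this
      linarith
  have hk0 : kF F 0 = 0 := by simp [kF]
  have hk1 : kF F 1 ≤ 0 := hk0 ▸ hk (by simp) (by simp) zero_le_one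
  have hv : MonotoneOn (fun r => uF F r - kF F 1 * (r ^ 2 / 2)) (Set.Icc 0 1) := by
    refine monotoneOn_of_hasDerivWithinAt_nonneg (convex_Icc 0 1)
      ((uF_cont hF).sub (by fun_prop)).continuousOn
      (f' := fun r => r * kF F r - kF F 1 * r) ?_ ?_
    · intro r hr
      rw [interior_Icc] at hr
      have h2 : HasDerivAt (fun r : ℝ => kF F 1 * (r ^ 2 / 2)) (kF F 1 * r) r := by
        have := ((hasDerivAt_pow 2 r).div_const 2).const_mul (kF F 1)
        refine this.congr_deriv ?_
        simp
      exact ((uF_deriv hF r hr.1.ne').sub h2).hasDerivWithinAt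
    · intro r hr
      rw [interior_Icc] at hr
      have := hk ⟨hr.1.le, hr.2.le⟩ (by simp) hr.2.le
      nlinarith [hr.1]
  have hv01 := hv (by simp : (0:ℝ) ∈ Set.Icc 0 1) (by simp : (1:ℝ) ∈ Set.Icc 0 1) zero_le_one
  have hu0 : uF F 0 = 0 := by simp [uF]
  simp only [hu0] at hv01
  norm_num at hv01
  linarith

lemma uF_inv {F : Fin 3 → Fin 3 → E3 → ℝ} (hF : ∀ i j, Sm (F i j)) (r : ℝ) (hr : 0 < r) :
    r⁻¹ * uF F r = r ^ 2 * sI (fun y => (∑ j, F j j (r • y)) - ∑ i, ∑ j, F i j (r • y) * y i * y j)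
      - 2 * (r ^ 2 * ∫ x in Metric.closedBall (0 : E3) 1, ∑ j, F j j (r • x)) := by
  have hFr : ∀ i j, Continuous (fun y => F i j (r • y)) := fun i j => ((hF i j).scale r).continuous
  have hFm : ∀ i j, Continuous (fun y : E3 => F i j (r • y) * y i * y j) := fun i j =>
    ((((hF i j).scale r).mul (Sm.coord i)).mul (Sm.coord j)).continuous
  have h1 : sI (fun y => (∑ j, F j j (r • y)) - ∑ i, ∑ j, F i j (r • y) * y i * y j)
      = sP (Fr F r) - sQ (Fr F r) := by
    rw [sI_sub, sI_sum, sI_sum]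
    · congr 1
      refine Finset.sum_congr rfl fun i _ => ?_
      rw [sI_sum]
      · refine Finset.sum_congr rfl fun j _ => sI_congr fun x _ => ?_
        simp only [Fr]; ring
      · exact fun j => hFm i j
    · exact fun i => continuous_finsetSum _ fun j _ => hFm i j
    · intro j; exact hFr j j
    · exact continuous_finsetSum _ fun j _ => hFr j j
    · exact continuous_finsetSum _ fun i _ => continuous_finsetSum _ fun j _ => hFm i j
  have h2 : ∫ x in Metric.closedBall (0 : E3) 1, ∑ j, F j j (r • x)
      = r⁻¹ ^ 3 * ∫ ρ in (0:ℝ)..r, ρ ^ 2 * sP (Fr F ρ) := by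
    rw [polar_ball _ (continuous_finsetSum _ fun j _ => hFr j j)]
    have : ∀ ρ : ℝ, ρ ^ 2 * sI (fun y => ∑ j, F j j (r • (ρ • y)))
        = r⁻¹ ^ 2 * ((fun t => t ^ 2 * sP (Fr F t)) (r * ρ)) := by
      intro ρ
      have h3 : sI (fun y => ∑ j, F j j (r • (ρ • y))) = sP (Fr F (r * ρ)) := by
        simp only [smul_smul]
        rw [sI_sum _ fun j => ((hF j j).scale (r * ρ)).continuous]; rfl
      rw [h3]; field_simp
    simp only [this]
    rw [intervalIntegral.integral_const_mul,
      intervalIntegral.integral_comp_mul_left (fun t => t ^ 2 * sP (Fr F t)) hr.ne']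
    simp
    ring
  rw [h1, h2, uF]
  field_simp

lemma final_deriv {F : Fin 3 → Fin 3 → E3 → ℝ} (hF : ∀ i j, Sm (F i j)) :
    HasDerivAt (fun s => s * uF F s⁻¹) (uF F 1 - kF F 1) 1 := by
  have h1 : HasDerivAt (fun s : ℝ => s⁻¹) (-1) 1 := by
    simpa using hasDerivAt_inv (one_ne_zero (α := ℝ))
  have h2 : HasDerivAt (uF F) (kF F 1) ((1:ℝ)⁻¹) := by
    simpa using uF_deriv hF 1 one_ne_zero
  refine ((hasDerivAt_id (1:ℝ)).mul (h2.comp 1 h1)).congr_deriv ?_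
  simp; ring

open Metric Filter Topology in
lemma exists_F (T : E3 → Fin 3 → Fin 3 → ℝ)
    (hsmooth : ContDiffOn ℝ (⊤ : ℕ∞) (fun x => T x) {(0 : E3)}ᶜ) (ξ : E3) (hξ : 1 < ‖ξ‖) :
    ∃ (F : Fin 3 → Fin 3 → E3 → ℝ) (δ : ℝ), 1 < δ ∧ δ < ‖ξ‖ ∧ (∀ i j, Sm (F i j)) ∧
      ∀ i j y, ‖y‖ ≤ δ → F i j y = T (ξ + y) i j := by
  obtain ⟨a, ha1, ha2⟩ := exists_between hξ
  obtain ⟨b, hb1, hb2⟩ := exists_between ha2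
  let χ : ContDiffBump (0 : E3) := ⟨a, b, by linarith, hb1⟩
  refine ⟨fun i j y => χ y * T (ξ + y) i j, a, ha1, ha2, ?_, ?_⟩
  · intro i j
    unfold Sm
    rw [contDiff_iff_contDiffAt]
    intro y
    by_cases hy : ξ + y = 0
    · have : (fun y => χ y * T (ξ + y) i j) =ᶠ[𝓝 y] fun _ => 0 := by
        have hyn : ‖y‖ = ‖ξ‖ := by rw [← neg_eq_of_add_eq_zero_right hy, norm_neg]
        have : ∀ᶠ z in 𝓝 y, b < ‖z‖ := continuous_norm.continuousAt.eventually_const_lt (by simpa only [hyn] using hb2)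
        filter_upwards [this] with z hz
        rw [χ.zero_of_le_dist (by simpa using hz.le), zero_mul]
      exact contDiffAt_const.congr_of_eventuallyEq this
    · have h1 : ContDiffAt ℝ (⊤ : ℕ∞) T (ξ + y) :=
        (hsmooth (ξ + y) hy).contDiffAt (isOpen_compl_singleton.mem_nhds hy)
      have h2 : ContDiffAt ℝ (⊤ : ℕ∞) (fun y => T (ξ + y)) y :=
        ContDiffAt.comp (g := T) (f := fun y => ξ + y) y h1 (by fun_prop)
      exact χ.contDiff.contDiffAt.mul (contDiffAt_pi.1 (contDiffAt_pi.1 h2 i) j)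
  · intro i j y hy
    show χ y * _ = _
    rw [χ.one_of_mem_closedBall (by simpa using hy), one_mul]

open Filter Topology in
lemma pd_pd_congr {f g : E3 → ℝ} {ξ y : E3} (h : f =ᶠ[𝓝 y] fun z => g (ξ + z)) (i j : Fin 3) :
    pd (pd f j) i y = pd (pd g j) i (ξ + y) := by
  have hp : ∀ (g : E3 → ℝ) (k : Fin 3) (z : E3), pd (fun w => g (ξ + w)) k z = pd g k (ξ + z) := by
    intro g k z
    unfold pd
    rw [fderiv_comp_add_left]
  have h1 : pd f j =ᶠ[𝓝 y] fun z => pd g j (ξ + z) := by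
    filter_upwards [h.eventuallyEq_nhds] with z hz
    rw [← hp]
    unfold pd
    rw [hz.fderiv_eq]
  rw [← hp]
  conv_lhs => unfold pd
  conv_rhs => unfold pd
  exact congrArg (fun L : E3 →L[ℝ] ℝ => L (e3 i)) h1.fderiv_eq

theorem deriv_G_nonneg (T : E3 → Fin 3 → Fin 3 → ℝ)
    (hsmooth : ContDiffOn ℝ (⊤ : ℕ∞) (fun x => T x) {(0 : E3)}ᶜ)
    (hsym : ∀ x i j, T x i j = T x j i)
    (hhom : ∀ c : ℝ, 0 < c → ∀ x : E3, x ≠ 0 → ∀ i j, T (c • x) i j = (c ^ 2)⁻¹ * T x i j)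
    (hscal : ∀ x : E3, x ≠ 0 → 0 ≤ scalDiv T x)
    (ξ : E3) (hξ : 1 < ‖ξ‖) (G : ℝ → ℝ)
    (hG : ∀ s : ℝ, G s =
      (∫ y : Metric.sphere (0 : E3) 1,
          (trT T (s • ξ + (y : E3)) - quadT T (s • ξ + (y : E3)) (y : E3)) ∂sphereMeasure)
        - 2 * ∫ x in Metric.closedBall (s • ξ) 1, trT T x) :
    ∃ G'1 : ℝ, HasDerivAt G G'1 1 ∧ 0 ≤ G'1 := by
  obtain ⟨F, δ, hδ1, hδ2, hF, hFT⟩ := exists_F T hsmooth ξ hξ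
  have hne : ∀ y : E3, ‖y‖ ≤ δ → ξ + y ≠ 0 := by
    intro y hy h
    have : ‖y‖ = ‖ξ‖ := by rw [← neg_eq_of_add_eq_zero_right h, norm_neg]
    linarith
  have hsc : ∀ x, ‖x‖ ≤ 1 → 0 ≤ scF F x := by
    intro x hx
    have heq : ∀ i j, F i j =ᶠ[nhds x] fun z => (fun w => T w i j) (ξ + z) := by
      intro i j
      have : ∀ᶠ z in nhds x, ‖z‖ < δ := continuous_norm.continuousAt.eventually_lt_const (by linarith)
      filter_upwards [this] with z hz
      exact hFT i j z hz.le
    have : scF F x = scalDiv T (ξ + x) := by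
      unfold scF scalDiv
      refine Finset.sum_congr rfl fun i _ => Finset.sum_congr rfl fun j _ => ?_
      rw [pd_pd_congr (g := fun w => T w i j) (heq i j), pd_pd_congr (g := fun w => T w j j) (heq j j)]
    rw [this]
    exact hscal _ (hne x (by linarith))
  refine ⟨uF F 1 - kF F 1, ?_, main_1d hF hsc⟩
  refine (final_deriv hF).congr_of_eventuallyEq ?_
  have hev : ∀ᶠ s in nhds (1:ℝ), 0 < s ∧ s⁻¹ < δ := by
    refine (lt_mem_nhds one_pos).and ?_
    have : ContinuousAt (fun s : ℝ => s⁻¹) 1 := continuousAt_inv₀ one_ne_zero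
    exact this.eventually_lt_const (by simpa using hδ1)
  filter_upwards [hev] with s ⟨hs0, hsδ⟩
  have hr : 0 < s⁻¹ := inv_pos.2 hs0
  have key : ∀ y : E3, ‖y‖ ≤ 1 → ∀ i j, T (s • ξ + y) i j = s⁻¹ ^ 2 * F i j (s⁻¹ • y) := by
    intro y hy i j
    have hn : ‖s⁻¹ • y‖ ≤ δ := by
      rw [norm_smul, Real.norm_eq_abs, abs_of_pos hr]
      nlinarith
    have e : s • ξ + y = s • (ξ + s⁻¹ • y) := by
      rw [smul_add, smul_smul, mul_inv_cancel₀ hs0.ne', one_smul]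
    rw [hFT i j _ hn, e, hhom s hs0 _ (hne _ hn), inv_pow]
  have hU := uF_inv hF s⁻¹ hr
  rw [inv_inv] at hU
  rw [hU, hG]
  congr 1
  · rw [← sI_mul]
    refine sI_congr (f := fun y => trT T (s • ξ + y) - quadT T (s • ξ + y) y) fun y hy => ?_
    simp only [trT, quadT, key y hy.le, mul_sub, Finset.mul_sum, mul_assoc]
  · congr 1
    have hpre : Metric.closedBall (0 : E3) 1 = (fun y => s • ξ + y) ⁻¹' Metric.closedBall (s • ξ) 1 := by
      ext y; simp
    have hmp : MeasurePreserving (fun y : E3 => s • ξ + y) volume volume :=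
      measurePreserving_add_left volume (s • ξ)
    rw [← hmp.setIntegral_preimage_emb (measurableEmbedding_addLeft (s • ξ)), ← hpre,
      ← integral_const_mul]
    refine setIntegral_congr_fun Metric.isClosed_closedBall.measurableSet fun y hy => ?_
    have hy1 : ‖y‖ ≤ 1 := by simpa using hy
    simp only [trT, key y hy1, Finset.mul_sum]
end

section
/- Let T be a smooth symmetric 2-tensor field on an open set of ℝ^3 containing the closed ball B̄_1(p), let ν(x) = x - p be the outward unit normal to ∂B_1(p), and let tr_S(T)(x) = ∑_j T_{jj}(x) - T(ν(x),ν(x)) for x ∈ ∂B_1(p). Then ∫_{B_1(p)} ∑_{i,j}(D_i D_j T_{ij} - D_i D_i T_{jj}) dV = ∫_{∂B_1(p)} ( 2 tr_{ℝ^3}(T) - 3 tr_S(T) - tr_S(D_ν T) ) dA. -/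
open MeasureTheory Real

lemma finrank_E3 : Module.finrank ℝ E3 = 3 := by simp [E3]

lemma ioiPow_integral (F : ℝ → ℝ) :
    ∫ r : Set.Ioi (0:ℝ), F r ∂(Measure.volumeIoiPow 2) = ∫ r in Set.Ioi (0:ℝ), r ^ 2 * F r := by
  simp only [Measure.volumeIoiPow, ENNReal.ofReal]
  rw [integral_withDensity_eq_integral_smul,
    integral_subtype_comap measurableSet_Ioi fun a ↦ Real.toNNReal (a ^ 2) • F a,
    setIntegral_congr_fun measurableSet_Ioi fun x hx ↦ ?_]
  · simp only [NNReal.smul_def]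
    rw [Real.coe_toNNReal _ (pow_nonneg (Set.mem_Ioi.1 hx).le _), smul_eq_mul]
  · exact (measurable_subtype_coe.pow_const _).real_toNNReal

lemma ioiPow_integrable (F : ℝ → ℝ) :
    Integrable (fun r : Set.Ioi (0:ℝ) => F r) (Measure.volumeIoiPow 2) ↔
      IntegrableOn (fun r => r ^ 2 * F r) (Set.Ioi (0:ℝ)) := by
  rw [integrableOn_iff_comap_subtypeVal measurableSet_Ioi, Measure.volumeIoiPow,
    integrable_withDensity_iff_integrable_smul', integrable_congr]
  · refine .of_forall ?_
    rintro ⟨x, hx : 0 < x⟩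
    simp (disch := positivity) [ENNReal.toReal_ofReal]
  · fun_prop
  · simp

lemma polar_integral (g : E3 → ℝ) :
    ∫ x, g x = ∫ z : Metric.sphere (0 : E3) 1 × Set.Ioi (0:ℝ), g ((z.2 : ℝ) • (z.1 : E3))
      ∂(sphereMeasure.prod (Measure.volumeIoiPow 2)) := by
  have h := (volume : Measure E3).measurePreserving_homeomorphUnitSphereProd
  rw [finrank_E3] at h
  have h2 := h.integral_comp (Homeomorph.measurableEmbedding _)
    (fun z => g ((z.2 : ℝ) • (z.1 : E3)))
  rw [← restrict_compl_singleton (μ := (volume : Measure E3)) 0,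
    ← integral_subtype_comap (measurableSet_singleton _).compl]
  unfold sphereMeasure
  rw [← h2]
  refine integral_congr_ae (.of_forall ?_)
  rintro ⟨x, hx⟩
  have : ‖x‖ ≠ 0 := by simpa using hx
  simp [smul_smul, this]

lemma polar_integrable (g : E3 → ℝ) (hg : Integrable g) :
    Integrable (fun z : Metric.sphere (0 : E3) 1 × Set.Ioi (0:ℝ) => g ((z.2 : ℝ) • (z.1 : E3)))
      (sphereMeasure.prod (Measure.volumeIoiPow 2)) := by
  have h := (volume : Measure E3).measurePreserving_homeomorphUnitSphereProd
  rw [finrank_E3] at h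
  have h2 := h.integrable_comp_emb (Homeomorph.measurableEmbedding _)
    (g := fun z => g ((z.2 : ℝ) • (z.1 : E3)))
  rw [← restrict_compl_singleton (μ := (volume : Measure E3)) 0, ← IntegrableOn,
    integrableOn_iff_comap_subtypeVal (measurableSet_singleton _).compl] at hg
  unfold sphereMeasure
  rw [← h2]
  refine hg.congr (.of_forall ?_)
  rintro ⟨x, hx⟩
  have : ‖x‖ ≠ 0 := by simpa using hx
  simp [smul_smul, this]

lemma integral_fderiv_zero (h : E3 → ℝ) (hh : ContDiff ℝ 1 h) (hc : HasCompactSupport h) (v : E3) :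
    ∫ x, fderiv ℝ h x v = 0 := by
  have hi : Integrable (fun x => fderiv ℝ h x v) :=
    ((hh.continuous_fderiv one_ne_zero).clm_apply continuous_const).integrable_of_hasCompactSupport
      (hc.fderiv_apply ℝ v)
  have := integral_mul_fderiv_eq_neg_fderiv_mul_of_integrable (𝕜 := ℝ) (μ := (volume : Measure E3))
    (f := fun _ => 1) (g := h) (v := v) (by simp) (by simpa using hi)
    (by simpa using hh.continuous.integrable_of_hasCompactSupport hc) (by simp)
    (fun x _ => (hh.differentiable one_ne_zero) x)
  simpa using this

lemma fderiv_norm_E3 (x : E3) (hx : x ≠ 0) (v : E3) :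
    fderiv ℝ (fun z : E3 => ‖z‖) x v = ‖x‖⁻¹ * inner ℝ x v := by
  have h0 : ‖x‖ ≠ 0 := by simpa using hx
  have h1 : HasFDerivAt (fun z : E3 => ‖z‖) (fderiv ℝ (fun z : E3 => ‖z‖) x) x :=
    ((contDiffAt_norm ℝ hx (n := 1)).differentiableAt one_ne_zero).hasFDerivAt
  have h2 := (h1.pow 2).unique (hasStrictFDerivAt_norm_sq x).hasFDerivAt
  have h3 := congrArg (fun L => L v) h2
  simp at h3
  field_simp
  linarith

lemma inner_e3 (x : E3) (i : Fin 3) : inner ℝ x (e3 i) = x i := by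
  simp [e3, EuclideanSpace.inner_single_right]

lemma hasFDerivAt_ext (φ : ℝ → ℝ) (hφ : ContDiff ℝ 1 φ) (f : E3 → ℝ) (x : E3) (hx : x ≠ 0)
    (hf : DifferentiableAt ℝ f (‖x‖⁻¹ • x)) (v : E3) :
    fderiv ℝ (fun z => φ ‖z‖ * f (‖z‖⁻¹ • z)) x v =
      deriv φ ‖x‖ * (inner ℝ (‖x‖⁻¹ • x) v * f (‖x‖⁻¹ • x))
      + φ ‖x‖ * ‖x‖⁻¹ * (fderiv ℝ f (‖x‖⁻¹ • x) v
          - inner ℝ (‖x‖⁻¹ • x) v * fderiv ℝ f (‖x‖⁻¹ • x) (‖x‖⁻¹ • x)) := by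
  have h0 : ‖x‖ ≠ 0 := by simpa using hx
  have h1 : HasFDerivAt (fun z : E3 => ‖z‖) (fderiv ℝ (fun z : E3 => ‖z‖) x) x :=
    ((contDiffAt_norm ℝ hx (n := 1)).differentiableAt one_ne_zero).hasFDerivAt
  have h2 : HasDerivAt φ (deriv φ ‖x‖) ‖x‖ := ((hφ.differentiable one_ne_zero) _).hasDerivAt
  have h3 := h2.comp_hasFDerivAt x h1
  have h4 := ((hasDerivAt_inv h0).comp_hasFDerivAt x h1).smul (hasFDerivAt_id (𝕜 := ℝ) x)
  have h5 := HasFDerivAt.comp x (f := fun z : E3 => ‖z‖⁻¹ • z) hf.hasFDerivAt h4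
  have h6 := h3.mul h5
  have h7 : fderiv ℝ (fun z => φ ‖z‖ * f (‖z‖⁻¹ • z)) x = _ := h6.fderiv
  rw [h7]
  simp [fderiv_norm_E3 x hx, inner_smul_left]
  field_simp
  ring

lemma exists_bump : ∃ φ : ℝ → ℝ, ContDiff ℝ 1 φ ∧ (∀ r, r < 1/4 → φ r = 0) ∧
    (∀ r, 2 < r → φ r = 0) ∧ HasCompactSupport φ ∧ (∫ r in Set.Ioi (0:ℝ), r * φ r) ≠ 0 := by
  let b : ContDiffBump (1:ℝ) := ⟨1/4, 1/2, by norm_num, by norm_num⟩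
  have hz : ∀ r, (r < 1/4 ∨ 2 < r) → b r = 0 := by
    intro r hr
    apply b.zero_of_le_dist
    rw [Real.dist_eq]
    change (1/2:ℝ) ≤ _
    rcases hr with hr | hr
    · rw [abs_of_neg (by linarith)]; linarith
    · rw [abs_of_pos (by linarith)]; linarith
  refine ⟨b, b.contDiff, fun r hr => hz r (Or.inl hr), fun r hr => hz r (Or.inr hr),
    b.hasCompactSupport, ?_⟩
  have hcont : Continuous fun r : ℝ => r * b r := continuous_id.mul b.continuous
  have hcs : HasCompactSupport fun r : ℝ => r * b r := b.hasCompactSupport.mul_left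
  have hnn : ∀ r, 0 ≤ r * b r := by
    intro r
    by_cases h : r < 1/4
    · rw [hz r (Or.inl h)]; simp
    · exact mul_nonneg (by linarith) b.nonneg
  have : ∫ r in Set.Ioi (0:ℝ), r * b r = ∫ r, r * b r := by
    apply setIntegral_eq_integral_of_forall_compl_eq_zero
    intro r hr
    rw [hz r (Or.inl _)]; simp
    simp at hr; linarith
  rw [this]
  refine (hcont.integral_pos_of_hasCompactSupport_nonneg_nonzero hcs hnn (x := 1) ?_).ne'
  have : b 1 = 1 := b.one_of_mem_closedBall (by simp; exact b.rIn_pos.le)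
  simp [this]

lemma bump_parts (φ : ℝ → ℝ) (hφ : ContDiff ℝ 1 φ) (hz : ∀ r, r < 1/4 → φ r = 0)
    (hc : HasCompactSupport φ) :
    ∫ r in Set.Ioi (0:ℝ), r ^ 2 * deriv φ r = - 2 * ∫ r in Set.Ioi (0:ℝ), r * φ r := by
  have hd : Continuous (deriv φ) := hφ.continuous_deriv le_rfl
  have hdz : ∀ r, r < 1/4 → deriv φ r = 0 := by
    intro r hr
    have : φ =ᶠ[nhds r] fun _ => 0 := by
      filter_upwards [Iio_mem_nhds hr] with s hs using hz s hs
    rw [this.deriv_eq]; simp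
  have e1 : ∫ r in Set.Ioi (0:ℝ), r ^ 2 * deriv φ r = ∫ r, r ^ 2 * deriv φ r := by
    apply setIntegral_eq_integral_of_forall_compl_eq_zero
    intro r hr
    rw [hdz r (by simp at hr; linarith)]; simp
  have e2 : ∫ r in Set.Ioi (0:ℝ), r * φ r = ∫ r, r * φ r := by
    apply setIntegral_eq_integral_of_forall_compl_eq_zero
    intro r hr
    rw [hz r (by simp at hr; linarith)]; simp
  rw [e1, e2]
  have := integral_mul_deriv_eq_deriv_mul_of_integrable (u := fun r : ℝ => r ^ 2)
    (u' := fun r => 2 * r) (v := φ) (v' := deriv φ) (fun x _ => by simpa using hasDerivAt_pow 2 x)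
    (fun x _ => ((hφ.differentiable one_ne_zero) x).hasDerivAt)
    (((continuous_pow 2).mul hd).integrable_of_hasCompactSupport hc.deriv.mul_left)
    (((continuous_const.mul continuous_id).mul hφ.continuous).integrable_of_hasCompactSupport
      hc.mul_left)
    (((continuous_pow 2).mul hφ.continuous).integrable_of_hasCompactSupport hc.mul_left)
  rw [this, ← integral_const_mul, ← integral_neg]
  congr 1; ext r; ring

lemma sphere_integrable (a : E3 → ℝ) (ha : ∀ y : E3, ‖y‖ = 1 → ContinuousAt a y) :
    Integrable (fun y : Metric.sphere (0 : E3) 1 => a y) sphereMeasure := by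
  have : Continuous (fun y : Metric.sphere (0 : E3) 1 => a y) := by
    rw [continuous_iff_continuousAt]
    intro y
    exact ContinuousAt.comp (ha y (by simp)) continuous_subtype_val.continuousAt
  exact this.integrable_of_hasCompactSupport (HasCompactSupport.of_compactSpace _)

lemma continuousAt_fderiv {f : E3 → ℝ} {y : E3} (hf : ContDiffAt ℝ 1 f y) :
    ContinuousAt (fderiv ℝ f) y :=
  (hf.fderiv_right (m := 0) (by simp)).continuousAt

lemma sphere_parts (f : E3 → ℝ) (hf : ∀ y : E3, ‖y‖ = 1 → ContDiffAt ℝ 1 f y) (i : Fin 3) :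
    ∫ y : Metric.sphere (0 : E3) 1, fderiv ℝ f y (e3 i) ∂sphereMeasure =
    ∫ y : Metric.sphere (0 : E3) 1,
      ((y : E3) i * fderiv ℝ f y y + 2 * ((y : E3) i * f y)) ∂sphereMeasure := by
  obtain ⟨φ, hφ, hz1, hz2, hc, hne⟩ := exists_bump
  have hu : ∀ x : E3, x ≠ 0 → ‖‖x‖⁻¹ • x‖ = 1 := by
    intro x hx
    have h0 : ‖x‖ ≠ 0 := by simpa using hx
    simp [norm_smul, h0]
  have hh : ContDiff ℝ 1 (fun z : E3 => φ ‖z‖ * f (‖z‖⁻¹ • z)) := by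
    rw [contDiff_iff_contDiffAt]
    intro x
    by_cases hx : x = 0
    · subst hx
      have : (fun z : E3 => φ ‖z‖ * f (‖z‖⁻¹ • z)) =ᶠ[nhds 0] fun _ => 0 := by
        filter_upwards [Metric.ball_mem_nhds (0:E3) (show (0:ℝ) < 1/4 by norm_num)] with z hz
        rw [hz1 _ (by simpa using hz)]; simp
      exact contDiffAt_const.congr_of_eventuallyEq this
    · have h0 : ‖x‖ ≠ 0 := by simpa using hx
      have hn : ContDiffAt ℝ 1 (fun z : E3 => ‖z‖) x := contDiffAt_norm ℝ hx
      refine ContDiffAt.mul (hφ.contDiffAt.comp x hn) ?_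
      exact ContDiffAt.comp x (f := fun z : E3 => ‖z‖⁻¹ • z) (hf _ (hu x hx))
        ((hn.inv h0).smul contDiffAt_id)
  have hcs : HasCompactSupport (fun z : E3 => φ ‖z‖ * f (‖z‖⁻¹ • z)) := by
    refine HasCompactSupport.intro (isCompact_closedBall (0:E3) 2) ?_
    intro x hx
    rw [hz2 _ (by simpa using hx)]; simp
  have key := integral_fderiv_zero _ hh hcs (e3 i)
  rw [polar_integral] at key
  have ia : Integrable (fun y : Metric.sphere (0 : E3) 1 => (y : E3) i * f y) sphereMeasure :=
    sphere_integrable (fun y => y i * f y) fun y hy =>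
      ContinuousAt.mul (by fun_prop) (hf y hy).continuousAt
  have ic : Integrable (fun y : Metric.sphere (0 : E3) 1 => (y : E3) i * fderiv ℝ f y y)
      sphereMeasure :=
    sphere_integrable (fun y => y i * fderiv ℝ f y y) fun y hy =>
      ContinuousAt.mul (by fun_prop) ((continuousAt_fderiv (hf y hy)).clm_apply continuousAt_id)
  have id : Integrable (fun y : Metric.sphere (0 : E3) 1 => fderiv ℝ f y (e3 i))
      sphereMeasure :=
    sphere_integrable (fun y => fderiv ℝ f y (e3 i)) fun y hy =>
      ((continuousAt_fderiv (hf y hy)).clm_apply continuousAt_const)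
  have ib : Integrable (fun y : Metric.sphere (0 : E3) 1 =>
      fderiv ℝ f y (e3 i) - (y : E3) i * fderiv ℝ f y y) sphereMeasure := id.sub ic
  have hd : Continuous (deriv φ) := hφ.continuous_deriv le_rfl
  have i1 : Integrable (fun r : Set.Ioi (0:ℝ) => deriv φ r) (Measure.volumeIoiPow 2) := by
    rw [ioiPow_integrable]
    exact (((continuous_pow 2).mul hd).integrable_of_hasCompactSupport
      hc.deriv.mul_left).integrableOn
  have e2 : Set.EqOn (fun r : ℝ => r ^ 2 * (φ r * r⁻¹)) (fun r => r * φ r) (Set.Ioi 0) := by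
    intro r hr
    have : r ≠ 0 := (Set.mem_Ioi.1 hr).ne'
    simp only
    field_simp
  have i2 : Integrable (fun r : Set.Ioi (0:ℝ) => φ r * (r:ℝ)⁻¹) (Measure.volumeIoiPow 2) := by
    rw [ioiPow_integrable (fun r => φ r * r⁻¹), integrableOn_congr_fun e2 measurableSet_Ioi]
    exact ((continuous_id.mul hφ.continuous).integrable_of_hasCompactSupport
      hc.mul_left).integrableOn
  have J1 := ia.mul_prod i1
  have J2 := ib.mul_prod i2
  have key2 : ∫ z : Metric.sphere (0 : E3) 1 × Set.Ioi (0:ℝ),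
      ((((z.1 : E3) i * f z.1) * deriv φ z.2) +
      (fderiv ℝ f z.1 (e3 i) - (z.1 : E3) i * fderiv ℝ f z.1 z.1) * (φ z.2 * (z.2 : ℝ)⁻¹))
      ∂(sphereMeasure.prod (Measure.volumeIoiPow 2)) = 0 := by
    refine Eq.trans ?_ key
    refine integral_congr_ae (.of_forall ?_)
    rintro ⟨⟨y, hy⟩, ⟨r, hr⟩⟩
    have hr : 0 < r := hr
    have hy1 : ‖y‖ = 1 := by simpa using hy
    have hn : ‖r • y‖ = r := by rw [norm_smul, hy1, Real.norm_of_nonneg hr.le, mul_one]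
    have hne : r • y ≠ 0 := by rw [← norm_pos_iff, hn]; exact hr
    have hry : r⁻¹ • r • y = y := by rw [smul_smul, inv_mul_cancel₀ hr.ne', one_smul]
    have := hasFDerivAt_ext φ hφ f (r • y) hne
      ((hf _ (hu _ hne)).differentiableAt one_ne_zero) (e3 i)
    simp only [this, hn, hry, inner_e3]
    ring
  rw [integral_add J1 J2, integral_prod_mul (fun y : Metric.sphere (0 : E3) 1 => (y : E3) i * f y)
    (fun r : Set.Ioi (0:ℝ) => deriv φ r),
    integral_prod_mul (fun y : Metric.sphere (0 : E3) 1 =>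
      fderiv ℝ f y (e3 i) - (y : E3) i * fderiv ℝ f y y)
    (fun r : Set.Ioi (0:ℝ) => φ r * (r:ℝ)⁻¹), ioiPow_integral, 
    ioiPow_integral (fun r => φ r * r⁻¹), setIntegral_congr_fun measurableSet_Ioi e2,
    bump_parts φ hφ hz1 hc, integral_sub id ic] at key2
  rw [integral_add ic (ia.const_mul 2), integral_const_mul]
  refine mul_right_cancel₀ hne ?_
  linarith

lemma unit_ball_div (f : E3 → ℝ) (hf : ∀ x : E3, ‖x‖ ≤ 1 → ContDiffAt ℝ 1 f x) (i : Fin 3) :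
    ∫ x in Metric.closedBall (0 : E3) 1, fderiv ℝ f x (e3 i) =
    ∫ y : Metric.sphere (0 : E3) 1, (y : E3) i * f y ∂sphereMeasure := by
  have hg : Integrable ((Metric.closedBall (0 : E3) 1).indicator fun x => fderiv ℝ f x (e3 i)) := by
    rw [integrable_indicator_iff Metric.isClosed_closedBall.measurableSet]
    refine ContinuousOn.integrableOn_compact (isCompact_closedBall _ _) ?_
    intro x hx
    exact ((continuousAt_fderiv (hf x (by simpa using hx))).clm_apply
      continuousAt_const).continuousWithinAt
  have hny : ∀ (y : Metric.sphere (0 : E3) 1) (r : ℝ), 0 ≤ r → ‖r • (y : E3)‖ = r := by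
    intro y r hr
    rw [norm_smul, Real.norm_of_nonneg hr]; simp
  let H : Metric.sphere (0 : E3) 1 → ℝ → ℝ := fun y r =>
    r ^ 2 * ((y : E3) i * fderiv ℝ f (r • (y : E3)) y) + 2 * r * ((y : E3) i * f (r • (y : E3)))
  have hHc : ContinuousOn (Function.uncurry H) (Set.univ ×ˢ Set.Icc (0:ℝ) 1) := by
    rintro ⟨y, r⟩ ⟨-, hr⟩
    have hc := hf (r • (y : E3)) (by rw [hny y r hr.1]; exact hr.2)
    have hs : ContinuousAt (fun z : Metric.sphere (0 : E3) 1 × ℝ => z.2 • (z.1 : E3)) (y, r) := by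
      fun_prop
    have h1 : ContinuousAt (fun z : Metric.sphere (0 : E3) 1 × ℝ => f (z.2 • (z.1 : E3))) (y, r) :=
      ContinuousAt.comp (g := f) (f := fun z : Metric.sphere (0 : E3) 1 × ℝ => z.2 • (z.1 : E3))
        hc.continuousAt hs
    have h2 : ContinuousAt (fun z : Metric.sphere (0 : E3) 1 × ℝ => 
        fderiv ℝ f (z.2 • (z.1 : E3))) (y, r) :=
      ContinuousAt.comp (g := fderiv ℝ f)
        (f := fun z : Metric.sphere (0 : E3) 1 × ℝ => z.2 • (z.1 : E3))
        (continuousAt_fderiv hc) hs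
    have h3 : ContinuousAt (fun z : Metric.sphere (0 : E3) 1 × ℝ => 
        fderiv ℝ f (z.2 • (z.1 : E3)) z.1) (y, r) := h2.clm_apply (by fun_prop)
    have h4 : ContinuousAt (fun z : Metric.sphere (0 : E3) 1 × ℝ => (z.1 : E3) i) (y, r) := by
      fun_prop
    have h5 : ContinuousAt (fun z : Metric.sphere (0 : E3) 1 × ℝ => z.2) (y, r) := by
      fun_prop
    exact ((((h5.pow 2).mul (h4.mul h3))).add
      (((continuousAt_const (y := (2:ℝ))).mul h5).mul (h4.mul h1))).continuousWithinAt
  have hHi : Integrable (Function.uncurry H)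
      (sphereMeasure.prod (volume.restrict (Set.Ioc (0:ℝ) 1))) := by
    have := hHc.integrableOn_compact (μ := sphereMeasure.prod volume)
      (isCompact_univ.prod isCompact_Icc)
    rw [IntegrableOn, ← Measure.prod_restrict, Measure.restrict_univ] at this
    rwa [restrict_Ioc_eq_restrict_Icc]
  rw [← integral_indicator Metric.isClosed_closedBall.measurableSet, polar_integral,
    integral_prod_symm _ (polar_integrable _ hg)]
  rw [ioiPow_integral (fun r => ∫ y : Metric.sphere (0 : E3) 1,
    (Metric.closedBall (0 : E3) 1).indicator (fun x => fderiv ℝ f x (e3 i)) (r • (y : E3))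
      ∂sphereMeasure)]
  have step : ∫ r in Set.Ioi (0:ℝ), r ^ 2 * ∫ y : Metric.sphere (0 : E3) 1,
      (Metric.closedBall (0 : E3) 1).indicator (fun x => fderiv ℝ f x (e3 i)) (r • (y : E3))
      ∂sphereMeasure = ∫ r in Set.Ioc (0:ℝ) 1, ∫ y, H y r ∂sphereMeasure := by
    rw [setIntegral_eq_of_subset_of_forall_sdiff_eq_zero measurableSet_Ioi
      (s := Set.Ioc (0:ℝ) 1) (fun r hr => hr.1)]
    · refine setIntegral_congr_fun measurableSet_Ioc ?_
      intro r hr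
      have hr0 : r ≠ 0 := hr.1.ne'
      have h1 : ∀ y : Metric.sphere (0 : E3) 1, (Metric.closedBall (0 : E3) 1).indicator
          (fun x => fderiv ℝ f x (e3 i)) (r • (y : E3)) = fderiv ℝ f (r • (y : E3)) (e3 i) := by
        intro y
        apply Set.indicator_of_mem
        simp only [mem_closedBall_zero_iff]
        rw [hny y r hr.1.le]; exact hr.2
      simp only [h1]
      have h2 : ∀ y : E3, ‖y‖ = 1 → ContDiffAt ℝ 1 (fun z => f (r • z)) y := by
        intro y hy
        refine ContDiffAt.comp y (f := fun z : E3 => r • z) (hf _ ?_) (by fun_prop)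
        rw [hny ⟨y, by simpa using hy⟩ r hr.1.le]; exact hr.2
      have h3 : ∀ y : Metric.sphere (0 : E3) 1, ∀ v, fderiv ℝ (fun z => f (r • z)) y v
          = r * fderiv ℝ f (r • (y : E3)) v := by
        intro y v
        rw [fderiv_comp_smul]; simp
      have h4 := sphere_parts _ h2 i
      simp only [h3] at h4
      rw [integral_const_mul] at h4
      rw [pow_two, mul_assoc, h4, ← integral_const_mul]
      refine integral_congr_ae (.of_forall fun y => ?_)
      simp only [H]
      ring
    · intro r hr
      have hr1 : 1 < r := by
        by_contra h
        exact hr.2 ⟨hr.1, not_lt.1 h⟩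
      have h1 : ∀ y : Metric.sphere (0 : E3) 1, (Metric.closedBall (0 : E3) 1).indicator
          (fun x => fderiv ℝ f x (e3 i)) (r • (y : E3)) = 0 := by
        intro y
        apply Set.indicator_of_notMem
        simp only [mem_closedBall_zero_iff]
        rw [hny y r (by linarith)]; linarith
      simp [h1]
  rw [step, ← integral_integral_swap hHi]
  refine integral_congr_ae (.of_forall fun y => ?_)
  simp only
  rw [← intervalIntegral.integral_of_le zero_le_one]
  have hderiv : ∀ r ∈ Set.uIcc (0:ℝ) 1, HasDerivAt 
      (fun r : ℝ => r ^ 2 * ((y : E3) i * f (r • (y : E3)))) (H y r) r := by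
    intro r hr
    rw [Set.uIcc_of_le zero_le_one] at hr
    have hc := hf (r • (y : E3)) (by rw [hny y r hr.1]; exact hr.2)
    have h1 : HasDerivAt (fun r : ℝ => r • (y : E3)) (y : E3) r := by
      simpa using (hasDerivAt_id r).smul_const (y : E3)
    have h2 := (hc.differentiableAt one_ne_zero).hasFDerivAt.comp_hasDerivAt r h1
    have h3 := (hasDerivAt_pow 2 r).mul (h2.const_mul ((y : E3) i))
    refine h3.congr_deriv ?_
    simp [H]
    ring
  rw [intervalIntegral.integral_eq_sub_of_hasDerivAt hderiv]
  · simp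
  · apply ContinuousOn.intervalIntegrable
    rw [Set.uIcc_of_le zero_le_one]
    exact hHc.comp (f := fun r : ℝ => (y, r)) (by fun_prop) (fun r hr => ⟨trivial, hr⟩)

lemma pd_translate (F : E3 → ℝ) (p : E3) (i : Fin 3) :
    pd (fun z => F (p + z)) i = fun z => pd F i (p + z) := by
  funext z
  simp only [pd]
  rw [fderiv_comp_add_left]

lemma contDiffAt_pd {f : E3 → ℝ} {x : E3} (hf : ContDiffAt ℝ 2 f x) (i : Fin 3) :
    ContDiffAt ℝ 1 (pd f i) x :=
  (hf.fderiv_right (m := 1) (by norm_num)).clm_apply contDiffAt_const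

lemma coord_parts (f : E3 → ℝ) (hf : ∀ y : E3, ‖y‖ = 1 → ContDiffAt ℝ 1 f y) (i j : Fin 3) :
    ∫ y : Metric.sphere (0 : E3) 1, (y : E3) i * pd f j y ∂sphereMeasure =
    ∫ y : Metric.sphere (0 : E3) 1, (fderiv ℝ f y y * (y : E3) i * (y : E3) j
      + 3 * (f y * (y : E3) i * (y : E3) j) - if i = j then f y else 0) ∂sphereMeasure := by
  have hco : ∀ y : E3, HasFDerivAt (fun z : E3 => z i) (EuclideanSpace.proj (𝕜 := ℝ) i) y := 
    fun y => (EuclideanSpace.proj (𝕜 := ℝ) i).hasFDerivAt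
  have hco' : ContDiff ℝ 1 (fun z : E3 => z i) := (EuclideanSpace.proj (𝕜 := ℝ) i).contDiff
  have h := sphere_parts (fun z => z i * f z) (fun y hy => hco'.contDiffAt.mul (hf y hy)) j
  have hd : ∀ (y : Metric.sphere (0 : E3) 1) (v : E3), fderiv ℝ (fun z : E3 => z i * f z) y v
      = (y : E3) i * fderiv ℝ f y v + f y * v i := by
    intro y v
    have : fderiv ℝ (fun z : E3 => z i * f z) y = _ := ((hco y).mul ((hf y (by simp)).differentiableAt one_ne_zero).hasFDerivAt).fderiv
    rw [this]
    simp
  simp only [hd] at h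
  have hej : e3 j i = if i = j then 1 else 0 := by
    simp [e3]
  have i1 : Integrable (fun y : Metric.sphere (0 : E3) 1 => f y * e3 j i) sphereMeasure :=
    sphere_integrable (fun y => f y * e3 j i) fun y hy =>
      (hf y hy).continuousAt.mul continuousAt_const
  have i2 : Integrable (fun y : Metric.sphere (0 : E3) 1 => (y : E3) i * fderiv ℝ f y (e3 j))
      sphereMeasure :=
    sphere_integrable (fun y => y i * fderiv ℝ f y (e3 j)) fun y hy =>
      ContinuousAt.mul (by fun_prop) ((continuousAt_fderiv (hf y hy)).clm_apply continuousAt_const)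
  have i3 : Integrable (fun y : Metric.sphere (0 : E3) 1 =>
      (fderiv ℝ f y y * (y : E3) i * (y : E3) j + 3 * (f y * (y : E3) i * (y : E3) j)))
      sphereMeasure :=
    sphere_integrable (fun y => fderiv ℝ f y y * y i * y j + 3 * (f y * y i * y j)) fun y hy => by
      have a := (continuousAt_fderiv (hf y hy)).clm_apply continuousAt_id
      have b := (hf y hy).continuousAt
      have c : ContinuousAt (fun z : E3 => z i) y := by fun_prop
      have d : ContinuousAt (fun z : E3 => z j) y := by fun_prop
      exact ((a.mul c).mul d).add (continuousAt_const.mul ((b.mul c).mul d))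
  rw [integral_add i2 i1] at h
  have e : ∀ y : Metric.sphere (0 : E3) 1, (if i = j then f y else 0) = f y * e3 j i := by
    intro y; rw [hej]; simp
  simp only [e]
  rw [integral_sub i3 i1, eq_sub_iff_add_eq]
  refine h.trans (integral_congr_ae (.of_forall fun y => ?_))
  simp only
  ring

lemma fderiv_eq_sum_pd (f : E3 → ℝ) (y v : E3) : fderiv ℝ f y v = ∑ i, v i * pd f i y := by
  have hv : v = ∑ i, v i • e3 i := by
    ext j
    simp [e3, Pi.single_apply]
  conv_lhs => rw [hv]
  simp [pd]

lemma core (T : E3 → Fin 3 → Fin 3 → ℝ)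
    (hT : ∀ x : E3, ‖x‖ ≤ 1 → ∀ i j, ContDiffAt ℝ 2 (fun z => T z i j) x) :
    ∫ x in Metric.closedBall (0 : E3) 1, scalDiv T x
      = ∫ y : Metric.sphere (0 : E3) 1,
          (2 * trT T y - 3 * (trT T y - quadT T y y)
            - ((∑ j, fderiv ℝ (fun z => T z j j) y (y : E3))
               - ∑ i, ∑ j, fderiv ℝ (fun z => T z i j) y (y : E3)
                     * (y : E3) i * (y : E3) j)) ∂sphereMeasure := by
  have hb : ∀ i j k l, IntegrableOn (fun x => pd (pd (fun z => T z i j) k) l x)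
      (Metric.closedBall (0 : E3) 1) := by
    intro i j k l
    refine ContinuousOn.integrableOn_compact (isCompact_closedBall _ _) ?_
    intro x hx
    exact ((continuousAt_fderiv (contDiffAt_pd (hT x (by simpa using hx) i j) k)).clm_apply
      continuousAt_const).continuousWithinAt
  have hT1 : ∀ i j, ∀ y : E3, ‖y‖ = 1 → ContDiffAt ℝ 1 (fun z => T z i j) y :=
    fun i j y hy => (hT y hy.le i j).of_le (by norm_num)
  have hq : ∀ i j, Integrable (fun y : Metric.sphere (0 : E3) 1 =>
      (fderiv ℝ (fun z => T z i j) y y * (y : E3) i * (y : E3) j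
      + 3 * (T y i j * (y : E3) i * (y : E3) j) - if i = j then T y i j else 0)) sphereMeasure := by
    intro i j
    refine sphere_integrable (fun y => fderiv ℝ (fun z => T z i j) y y * y i * y j
      + 3 * (T y i j * y i * y j) - if i = j then T y i j else 0) fun y hy => ?_
    have a := (continuousAt_fderiv (hT1 i j y hy)).clm_apply continuousAt_id
    have b := (hT1 i j y hy).continuousAt
    have c : ContinuousAt (fun z : E3 => z i) y := by fun_prop
    have d : ContinuousAt (fun z : E3 => z j) y := by fun_prop
    refine (((a.mul c).mul d).add (continuousAt_const.mul ((b.mul c).mul d))).sub ?_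
    split_ifs
    · exact b
    · exact continuousAt_const
  have hp : ∀ i j, Integrable (fun y : Metric.sphere (0 : E3) 1 =>
      (y : E3) i * pd (fun z => T z j j) i y) sphereMeasure := by
    intro i j
    exact sphere_integrable (fun y => y i * pd (fun z => T z j j) i y) fun y hy =>
      ContinuousAt.mul (by fun_prop) ((continuousAt_fderiv (hT1 j j y hy)).clm_apply
        continuousAt_const)
  have hbs : ∀ i j, IntegrableOn (fun x => pd (pd (fun z => T z i j) j) i x
      - pd (pd (fun z => T z j j) i) i x) (Metric.closedBall (0 : E3) 1) :=
    fun i j => (hb i j j i).sub (hb j j i i)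
  have hqp : ∀ i j, Integrable (fun y : Metric.sphere (0 : E3) 1 =>
      (fderiv ℝ (fun z => T z i j) y y * (y : E3) i * (y : E3) j
      + 3 * (T y i j * (y : E3) i * (y : E3) j) - if i = j then T y i j else 0)
       - (y : E3) i * pd (fun z => T z j j) i y) sphereMeasure :=
    fun i j => (hq i j).sub (hp i j)
  have hd : ∀ i j k l, ∫ x in Metric.closedBall (0 : E3) 1, pd (pd (fun z => T z i j) k) l x
      = ∫ y : Metric.sphere (0 : E3) 1, (y : E3) l * pd (fun z => T z i j) k y ∂sphereMeasure :=
    fun i j k l => unit_ball_div _ (fun x hx => contDiffAt_pd (hT x hx i j) k) l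
  have hl : ∫ x in Metric.closedBall (0 : E3) 1, scalDiv T x = ∑ i, ∑ j,
      ∫ y : Metric.sphere (0 : E3) 1, 
      ((fderiv ℝ (fun z => T z i j) y y * (y : E3) i * (y : E3) j
      + 3 * (T y i j * (y : E3) i * (y : E3) j) - if i = j then T y i j else 0)
       - (y : E3) i * pd (fun z => T z j j) i y) ∂sphereMeasure := by
    unfold scalDiv
    rw [integral_finsetSum _ fun i _ => integrable_finsetSum _ fun j _ => 
      hbs i j]
    refine Finset.sum_congr rfl fun i _ => ?_
    rw [integral_finsetSum _ fun j _ => hbs i j]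
    refine Finset.sum_congr rfl fun j _ => ?_
    rw [integral_sub (hb i j j i) (hb j j i i), integral_sub (hq i j) (hp i j), hd, hd,
      coord_parts _ (hT1 i j)]
  rw [hl]
  have hs : ∀ i, ∑ j, ∫ y : Metric.sphere (0 : E3) 1, 
      ((fderiv ℝ (fun z => T z i j) y y * (y : E3) i * (y : E3) j
      + 3 * (T y i j * (y : E3) i * (y : E3) j) - if i = j then T y i j else 0)
       - (y : E3) i * pd (fun z => T z j j) i y) ∂sphereMeasure = 
      ∫ y : Metric.sphere (0 : E3) 1, ∑ j,
      ((fderiv ℝ (fun z => T z i j) y y * (y : E3) i * (y : E3) j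
      + 3 * (T y i j * (y : E3) i * (y : E3) j) - if i = j then T y i j else 0)
       - (y : E3) i * pd (fun z => T z j j) i y) ∂sphereMeasure := fun i =>
    (integral_finsetSum _ fun j _ => hqp i j).symm
  simp only [hs]
  rw [← integral_finsetSum _ fun i _ => integrable_finsetSum _ fun j _ => hqp i j]
  refine integral_congr_ae (.of_forall fun y => ?_)
  have e1 : ∑ j, fderiv ℝ (fun z => T z j j) y (y : E3) =
      ∑ i, ∑ j, (y : E3) i * pd (fun z => T z j j) i y := by
    rw [Finset.sum_comm]
    exact Finset.sum_congr rfl fun j _ => fderiv_eq_sum_pd _ _ _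
  simp only [e1, trT, quadT, Finset.sum_sub_distrib, Finset.sum_add_distrib, ← Finset.mul_sum,
    Finset.sum_ite_eq, Finset.mem_univ, if_true]
  ring

theorem divergence_identity (p : E3) (U : Set E3) (hU : IsOpen U)
    (hB : Metric.closedBall p 1 ⊆ U)
    (T : E3 → Fin 3 → Fin 3 → ℝ)
    (hsmooth : ContDiffOn ℝ (⊤ : ℕ∞) (fun x => T x) U)
    (hsym : ∀ x i j, T x i j = T x j i) :
    ∫ x in Metric.closedBall p 1, scalDiv T x
      = ∫ y : Metric.sphere (0 : E3) 1,
          (2 * trT T (p + (y : E3))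
            - 3 * (trT T (p + (y : E3)) - quadT T (p + (y : E3)) (y : E3))
            - ((∑ j, fderiv ℝ (fun z => T z j j) (p + (y : E3)) (y : E3))
               - ∑ i, ∑ j,
                   fderiv ℝ (fun z => T z i j) (p + (y : E3)) (y : E3)
                     * (y : E3) i * (y : E3) j)) ∂sphereMeasure := by
  have hT : ∀ x : E3, ‖x‖ ≤ 1 → ∀ i j, ContDiffAt ℝ 2 (fun z => T (p + z) i j) x := by
    intro x hx i j
    have hmem : p + x ∈ U := hB (by simpa using hx)
    have h1 : ContDiffAt ℝ 2 (fun x => T x) (p + x) :=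
      (hsmooth.contDiffAt (hU.mem_nhds hmem)).of_le (WithTop.coe_le_coe.2 le_top)
    have h2 : ContDiffAt ℝ 2 (fun z => T z i j) (p + x) :=
      contDiffAt_pi.1 (contDiffAt_pi.1 h1 i) j
    exact ContDiffAt.comp x (f := fun z => p + z) h2 (by fun_prop)
  have h := core (fun z => T (p + z)) hT
  have hsc : ∀ x, scalDiv (fun z => T (p + z)) x = scalDiv T (p + x) := by
    intro x
    unfold scalDiv
    refine Finset.sum_congr rfl fun i _ => Finset.sum_congr rfl fun j _ => ?_
    rw [pd_translate (fun z => T z i j), pd_translate (fun z => T z j j),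
      pd_translate (pd (fun z => T z i j) j), pd_translate (pd (fun z => T z j j) i)]
  have hfd : ∀ i j (y : E3), fderiv ℝ (fun z => T (p + z) i j) y
      = fderiv ℝ (fun z => T z i j) (p + y) := by
    intro i j y
    exact fderiv_comp_add_left (f := fun z => T z i j) p
  simp only [hsc, hfd] at h
  refine Eq.trans ?_ h
  have hm := (measurePreserving_add_left (volume : Measure E3) p).setIntegral_preimage_emb
    (measurableEmbedding_addLeft p) (scalDiv T) (Metric.closedBall p 1)
  rw [← hm]
  congr 2
  ext x
  simp
end
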